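/- Let D be an ADF, let v and v' be interpretations of D with v ≤_i v', and let a be an argument that is strongly acceptable (resp. strongly deniable) with respect to v and a least set S for a. Then a is also strongly acceptable (resp. strongly deniable) with respect to v' and the set S. -/

import Mathlib

/-!
An informationally greater interpretation has fewer completions, also after restricting both
interpretations to a set `P`. Hence the witness sets `P` in a derivation of strong acceptability or
deniability with respect to `v` serve unchanged for `v'`, with the same excluded sets.
-/

/-- Three truth values: true, false, undecided. -/
inductive TV : Type
  | t | f | u
deriving DecidableEq, Repr

/-- The information order on truth values: u <_i t and u <_i f. -/
def TV.ile (x y : TV) : Prop := x = TV.u ∨ x = y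

/-- The information order on interpretations, extended pointwise. -/
def ILE {A : Type*} (v w : A → TV) : Prop := ∀ a, TV.ile (v a) (w a)

/-- An abstract dialectical framework on a set of arguments `A`:
each argument `a` has an acceptance condition `C a : (A → Bool) → Bool`. -/
structure ADF (A : Type*) where
  C : A → (A → Bool) → Bool

/-- The trivial interpretation mapping every argument to undecided. -/
def trivialInterp (A : Type*) : A → TV := fun _ => TV.u

/-- The parents of `a` are the arguments on which its acceptance condition depends. -/
def ADF.parents {A : Type*} [DecidableEq A] (D : ADF A) (a : A) : Set A :=
  {b | ∃ w : A → Bool, D.C a w ≠ D.C a (Function.update w b (!w b))}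

/-- A two-valued assignment `w` completes a three-valued interpretation `v`. -/
def Completes {A : Type*} (w : A → Bool) (v : A → TV) : Prop :=
  ∀ b, (v b = TV.t → w b = true) ∧ (v b = TV.f → w b = false)

/-- `φ` is irrefutable under `v`: every completion of `v` makes `φ` true. -/
def Irrefutable {A : Type*} (φ : (A → Bool) → Bool) (v : A → TV) : Prop :=
  ∀ w : A → Bool, Completes w v → φ w = true

/-- `φ` is unsatisfiable under `v`: every completion of `v` makes `φ` false. -/
def Unsat {A : Type*} (φ : (A → Bool) → Bool) (v : A → TV) : Prop :=
  ∀ w : A → Bool, Completes w v → φ w = false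

open Classical in
/-- The characteristic operator Γ_D of an ADF. -/
noncomputable def Gamma {A : Type*} (D : ADF A) (v : A → TV) : A → TV := fun a =>
  if Irrefutable (D.C a) v then TV.t
  else if Unsat (D.C a) v then TV.f
  else TV.u

open Classical in
/-- `v|_P`: agrees with `v` on `P` and is undecided elsewhere. -/
noncomputable def restrictTV {A : Type*} (v : A → TV) (P : Set A) : A → TV :=
  fun b => if b ∈ P then v b else TV.u

/-- Strong acceptability/deniability of an argument with respect to interpretation `v`
and set `S`, relative to an excluded set `E` (the first index). An argument `a` with
`v a = t` (resp. `v a = f`) is strongly acceptable (resp. strongly deniable) iff there is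
`P ⊆ (parents a ∩ S) \ E` with `φ_a^{v|_P}` irrefutable (resp. unsatisfiable) and every
`p ∈ P` strongly acceptable/deniable relative to `E ∪ {p}`. -/
inductive SJrel {A : Type*} [DecidableEq A] (D : ADF A) (v : A → TV) (S : Set A) :
    Set A → A → Prop
  | acc (E : Set A) (a : A) (P : Set A)
      (ha : v a = TV.t)
      (hP : P ⊆ (D.parents a ∩ S) \ E)
      (hirr : Irrefutable (D.C a) (restrictTV v P))
      (hrec : ∀ p ∈ P, SJrel D v S (E ∪ {p}) p) : SJrel D v S E a
  | den (E : Set A) (a : A) (P : Set A)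
      (ha : v a = TV.f)
      (hP : P ⊆ (D.parents a ∩ S) \ E)
      (hunsat : Unsat (D.C a) (restrictTV v P))
      (hrec : ∀ p ∈ P, SJrel D v S (E ∪ {p}) p) : SJrel D v S E a

/-- `a` is strongly acceptable/deniable w.r.t. `v` and `S`
(i.e., relative to the excluded set `{a}`). -/
def StronglyJustified {A : Type*} [DecidableEq A] (D : ADF A) (v : A → TV)
    (S : Set A) (a : A) : Prop :=
  SJrel D v S {a} a

/-- `S` is a least set for `a` with respect to `v`. -/
def LeastSet {A : Type*} [DecidableEq A] (D : ADF A) (v : A → TV)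
    (a : A) (S : Set A) : Prop :=
  StronglyJustified D v S a ∧
  ∀ S' : Set A, S'.ncard < S.ncard → ¬ StronglyJustified D v S' a

/-- An interpretation is strongly admissible iff every argument assigned `t`/`f`
is strongly acceptable/deniable w.r.t. `v` and some set `S`. -/
def StronglyAdmissible {A : Type*} [DecidableEq A] (D : ADF A) (v : A → TV) : Prop :=
  ∀ a : A, v a ≠ TV.u → ∃ S : Set A, StronglyJustified D v S a

/-- `g` is the grounded interpretation of `D`: the least fixed point of `Γ_D`. -/
def IsGrounded {A : Type*} (D : ADF A) (g : A → TV) : Prop :=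
  Gamma D g = g ∧ ∀ w : A → TV, Gamma D w = w → ILE g w

/-- An interpretation is admissible iff `v ≤_i Γ_D(v)`. -/
def Admissible {A : Type*} (D : ADF A) (v : A → TV) : Prop :=
  ILE v (Gamma D v)

/-- An interpretation is conflict-free. -/
def ConflictFree {A : Type*} (D : ADF A) (v : A → TV) : Prop :=
  ∀ a : A, (v a = TV.t → ∃ w : A → Bool, Completes w v ∧ D.C a w = true) ∧
           (v a = TV.f → Unsat (D.C a) v)

/-- The join of two interpretations: take `v`'s value where defined, else `w`'s. -/
def joinI {A : Type*} (v w : A → TV) : A → TV :=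
  fun a => if v a = TV.u then w a else v a

section InformationOrder

variable {A : Type*} {v v' : A → TV}

theorem ILE.apply_eq_of_ne_u (hle : ILE v v') {b : A} {x : TV} (hb : v b = x) (hx : x ≠ TV.u) :
    v' b = x :=
  ((hle b).resolve_left (hb.trans_ne hx)).symm.trans hb

theorem ILE.restrictTV_mono (hle : ILE v v') (P : Set A) :
    ILE (restrictTV v P) (restrictTV v' P) := by
  intro b
  by_cases hb : b ∈ P
  · simpa only [restrictTV, if_pos hb] using hle b
  · exact Or.inl (if_neg hb)

theorem Completes.of_ile {w : A → Bool} (hw : Completes w v') (hle : ILE v v') :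
    Completes w v := fun b =>
  ⟨fun hb => (hw b).1 (hle.apply_eq_of_ne_u hb (by decide)),
    fun hb => (hw b).2 (hle.apply_eq_of_ne_u hb (by decide))⟩

theorem Irrefutable.mono {φ : (A → Bool) → Bool} (h : Irrefutable φ v) (hle : ILE v v') :
    Irrefutable φ v' :=
  fun w hw => h w (hw.of_ile hle)

theorem Unsat.mono {φ : (A → Bool) → Bool} (h : Unsat φ v) (hle : ILE v v') : Unsat φ v' :=
  fun w hw => h w (hw.of_ile hle)

end InformationOrder

theorem SJrel.mono {A : Type*} [DecidableEq A] {D : ADF A} {v v' : A → TV} {S S' E : Set A} {a : A}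
    (h : SJrel D v S E a) (hle : ILE v v') (hS : S ⊆ S') : SJrel D v' S' E a := by
  have candidates_subset (E : Set A) (a : A) : (D.parents a ∩ S) \ E ⊆ (D.parents a ∩ S') \ E :=
    Set.sdiff_subset_sdiff_left (Set.inter_subset_inter_right _ hS)
  induction h with
  | acc E a P ha hP hirr _ ih =>
    exact .acc E a P (hle.apply_eq_of_ne_u ha (by decide)) (hP.trans (candidates_subset E a))
      (hirr.mono (hle.restrictTV_mono P)) ih
  | den E a P ha hP hunsat _ ih =>
    exact .den E a P (hle.apply_eq_of_ne_u ha (by decide)) (hP.trans (candidates_subset E a))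
      (hunsat.mono (hle.restrictTV_mono P)) ih

theorem strongly_justified_mono_general {A : Type*} [DecidableEq A] (D : ADF A)
    (v v' : A → TV) (a : A) (S S' : Set A)
    (hle : ILE v v') (hS : S ⊆ S') (h : StronglyJustified D v S a) :
    StronglyJustified D v' S' a :=
  SJrel.mono h hle hS

/-- Strong acceptability/deniability w.r.t. a least set persists
when passing to an informationally greater interpretation. -/
theorem strongly_justified_mono {A : Type*} [Fintype A] [DecidableEq A] (D : ADF A)
    (v v' : A → TV) (a : A) (S : Set A)
    (hle : ILE v v') (hleast : LeastSet D v a S) :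
    StronglyJustified D v' S a :=
  strongly_justified_mono_general D v v' a S S hle subset_rfl hleast.1
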